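/- (Correctness of the one-bit communication protocol) Let a, b ∈ S² be unit vectors and let λ₀, λ₁ be independent, each uniformly distributed on S². Define λ_s = λ₀ if |a·λ₁| ≤ |a·λ₀| and λ_s = λ₁ otherwise, and set A = -sgn(a·λ_s), B = sgn(b·λ_s). Then for all α, β ∈ {-1, 1}, P(A = α and B = β) = (1 - αβ a·b)/4; that is, the protocol in which Alice performs the choice method and sends Bob the single bit indicating which of λ₀, λ₁ she accepted exactly reproduces the joint outcome distribution of projective measurements a, b on the singlet state. -/

import Mathlib

open MeasureTheory Metric
open scoped RealInnerProductSpace ENNReal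

/-- The unit sphere in ℝ³. -/
noncomputable abbrev Sphere2 := Metric.sphere (0 : EuclideanSpace ℝ (Fin 3)) 1

/-- The surface measure `σ` on the unit sphere of ℝ³ (total mass `4π`). -/
noncomputable def sphereMeasure : Measure Sphere2 :=
  (volume : Measure (EuclideanSpace ℝ (Fin 3))).toSphere

/-- The uniform probability measure `σ/(4π)` on the unit sphere of ℝ³. -/
noncomputable def uniformSphere : Measure Sphere2 :=
  (ENNReal.ofReal (4 * Real.pi))⁻¹ • sphereMeasure

/-- The joint distribution of two independent uniform points `(λ₀, λ₁)` on `S²`. -/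
noncomputable def pairMeasure : Measure (Sphere2 × Sphere2) :=
  uniformSphere.prod uniformSphere

/-- `sgn(x) = 1` if `x ≥ 0`, `-1` if `x < 0`. -/
noncomputable def sgn (x : ℝ) : ℝ := if 0 ≤ x then 1 else -1

/-- The choice method: accept `λ₀` if `|a·λ₁| ≤ |a·λ₀|`, else accept `λ₁`. -/
noncomputable def choice (a : EuclideanSpace ℝ (Fin 3)) (p : Sphere2 × Sphere2) : Sphere2 :=
  if |⟪a, (p.2 : EuclideanSpace ℝ (Fin 3))⟫| ≤ |⟪a, (p.1 : EuclideanSpace ℝ (Fin 3))⟫|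
  then p.1 else p.2

theorem exists_measurePreserving_inner_prod {a : EuclideanSpace ℝ (Fin 3)} (ha : ‖a‖ = 1) :
    ∃ φ : EuclideanSpace ℝ (Fin 3) → ℝ × EuclideanSpace ℝ (Fin 2), MeasurePreserving φ ∧
      ∀ x, (φ x).1 = ⟪a, x⟫ ∧ ‖x‖ ^ 2 = (φ x).1 ^ 2 + ‖(φ x).2‖ ^ 2 := by
  have hv : Orthonormal ℝ (({0} : Set (Fin 3)).domRestrict fun _ => a) :=
    ⟨fun _ => ha, fun i j hij => absurd (Subsingleton.elim i j) hij⟩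
  obtain ⟨e, he⟩ := hv.exists_orthonormalBasis_extension_of_card_eq (by simp)
  have he0 : e 0 = a := he 0 rfl
  refine ⟨_, ((MeasurePreserving.id volume).prod (PiLp.volume_preserving_toLp (Fin 2))).comp
    ((volume_preserving_piFinSuccAbove (fun _ : Fin 3 => ℝ) 0).comp
    ((PiLp.volume_preserving_ofLp (Fin 3)).comp e.measurePreserving_repr)), fun x => ⟨?_, ?_⟩⟩
  · simp [MeasurableEquiv.piFinSuccAbove, ← he0, e.repr_apply_apply]
  · rw [← e.repr.norm_map x, EuclideanSpace.norm_sq_eq, EuclideanSpace.norm_sq_eq]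
    simp [MeasurableEquiv.piFinSuccAbove, Fin.sum_univ_succ, Fin.tail]

theorem volume_annulus {t : ℝ} (ht : 0 < t) (ht1 : t ≤ 1) (u : ℝ) :
    volume {y : EuclideanSpace ℝ (Fin 2) |
        u ^ 2 + ‖y‖ ^ 2 < 1 ∧ u ^ 2 ≤ t ^ 2 * (u ^ 2 + ‖y‖ ^ 2)} =
      ENNReal.ofReal (Real.pi * (1 - u ^ 2 / t ^ 2)) := by
  have ht2 : 0 < t ^ 2 := by positivity
  have hle : u ^ 2 ≤ u ^ 2 / t ^ 2 := by
    rw [le_div_iff₀ ht2]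
    exact mul_le_of_le_one_right (sq_nonneg u) (pow_le_one₀ ht.le ht1)
  have hr : 0 ≤ u ^ 2 / t ^ 2 - u ^ 2 := by linarith
  have hiff (s : ℝ) : u ^ 2 ≤ t ^ 2 * (u ^ 2 + s) ↔ u ^ 2 / t ^ 2 - u ^ 2 ≤ s := by
    rw [sub_le_iff_le_add', div_le_iff₀' ht2]
  have hsets : {y : EuclideanSpace ℝ (Fin 2) |
        u ^ 2 + ‖y‖ ^ 2 < 1 ∧ u ^ 2 ≤ t ^ 2 * (u ^ 2 + ‖y‖ ^ 2)} =
      ball 0 √(1 - u ^ 2) \ ball 0 √(u ^ 2 / t ^ 2 - u ^ 2) := by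
    ext y
    simp only [Set.mem_ofPred_eq, hiff, Set.mem_sdiff, mem_ball_zero_iff, not_lt,
      Real.lt_sqrt (norm_nonneg y)]
    rw [lt_sub_iff_add_lt']
  rw [hsets]
  rcases le_total (u ^ 2 / t ^ 2) 1 with h | h
  · rw [measure_sdiff (ball_subset_ball (Real.sqrt_le_sqrt (by linarith)))
      measurableSet_ball.nullMeasurableSet measure_ball_lt_top.ne,
      EuclideanSpace.volume_ball_fin_two, EuclideanSpace.volume_ball_fin_two,
      ← ENNReal.ofReal_pow (Real.sqrt_nonneg _), ← ENNReal.ofReal_pow (Real.sqrt_nonneg _),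
      Real.sq_sqrt hr, Real.sq_sqrt (by linarith), ← ENNReal.ofReal_mul (by linarith),
      ← ENNReal.ofReal_mul hr, ← ENNReal.ofReal_sub _ (mul_nonneg hr Real.pi_nonneg)]
    congr 1
    ring
  · rw [Set.sdiff_eq_empty.2 (ball_subset_ball (Real.sqrt_le_sqrt (by linarith))), measure_empty,
      ENNReal.ofReal_of_nonpos]
    exact mul_nonpos_of_nonneg_of_nonpos Real.pi_nonneg (by linarith)

theorem lintegral_annulus {t : ℝ} (ht : 0 < t) :
    ∫⁻ u : ℝ, ENNReal.ofReal (Real.pi * (1 - u ^ 2 / t ^ 2)) =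
      ENNReal.ofReal (4 * Real.pi / 3 * t) := by
  have ht2 : 0 < t ^ 2 := by positivity
  have hsupp : Function.support (fun u : ℝ => ENNReal.ofReal (Real.pi * (1 - u ^ 2 / t ^ 2))) ⊆
      Set.Ioc (-t) t := by
    intro u hu
    rw [Function.mem_support, ne_eq, ENNReal.ofReal_eq_zero, not_le,
      mul_pos_iff_of_pos_left Real.pi_pos, sub_pos, div_lt_one ht2] at hu
    have := abs_lt.1 (abs_lt_of_sq_lt_sq hu ht.le)
    exact ⟨this.1, this.2.le⟩
  rw [← setLIntegral_eq_of_support_subset hsupp, ← ofReal_integral_eq_lintegral_ofReal,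
    ← intervalIntegral.integral_of_le (by linarith)]
  · congr 1
    simp only [div_eq_mul_inv]
    rw [intervalIntegral.integral_const_mul, intervalIntegral.integral_sub,
      intervalIntegral.integral_mul_const, integral_pow]
    · simp
      field_simp
      ring
    · simp
    · exact Continuous.intervalIntegrable (by fun_prop) _ _
  · exact (Continuous.integrableOn_Icc (by fun_prop)).mono_set Set.Ioc_subset_Icc_self
  · refine (ae_restrict_iff' measurableSet_Ioc).2 (.of_forall fun u hu => ?_)
    have : u ^ 2 ≤ t ^ 2 := sq_le_sq' hu.1.le hu.2
    exact mul_nonneg Real.pi_nonneg (sub_nonneg.2 ((div_le_one ht2).2 this))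

theorem volume_ball_inter_cone {a : EuclideanSpace ℝ (Fin 3)} (ha : ‖a‖ = 1) {t : ℝ}
    (ht : 0 < t) (ht1 : t ≤ 1) :
    volume {x : EuclideanSpace ℝ (Fin 3) | ‖x‖ < 1 ∧ |⟪a, x⟫| ≤ t * ‖x‖} =
      ENNReal.ofReal (4 * Real.pi / 3 * t) := by
  obtain ⟨φ, hφ, hφx⟩ := exists_measurePreserving_inner_prod ha
  let T : Set (ℝ × EuclideanSpace ℝ (Fin 2)) :=
    {p | p.1 ^ 2 + ‖p.2‖ ^ 2 < 1 ∧ p.1 ^ 2 ≤ t ^ 2 * (p.1 ^ 2 + ‖p.2‖ ^ 2)}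
  have hT : MeasurableSet T := by
    rw [show T = _ from Set.ofPred_and]
    exact (measurableSet_lt (by fun_prop) (by fun_prop)).inter
      (measurableSet_le (by fun_prop) (by fun_prop))
  have hpre : {x : EuclideanSpace ℝ (Fin 3) | ‖x‖ < 1 ∧ |⟪a, x⟫| ≤ t * ‖x‖} = φ ⁻¹' T := by
    ext x
    simp only [T, Set.mem_ofPred_eq, Set.mem_preimage, ← (hφx x).2]
    rw [(hφx x).1, ← mul_pow, sq_le_sq, abs_of_nonneg (mul_nonneg ht.le (norm_nonneg x)),
      sq_lt_one_iff₀ (norm_nonneg x)]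
  rw [hpre, hφ.measure_preimage hT.nullMeasurableSet, Measure.volume_eq_prod,
    Measure.prod_apply hT, ← lintegral_annulus ht]
  exact lintegral_congr fun u => volume_annulus ht ht1 u

open scoped Pointwise in
theorem mem_Ioo_smul_image_sphere {s : Set Sphere2} {x : EuclideanSpace ℝ (Fin 3)} :
    x ∈ Set.Ioo (0 : ℝ) 1 • (Subtype.val '' s) ↔
      ‖x‖ < 1 ∧ ∃ y ∈ s, ∃ r : ℝ, 0 < r ∧ x = r • (y : EuclideanSpace ℝ (Fin 3)) := by
  have hnorm (y : Sphere2) {r : ℝ} (hr : 0 < r) :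
      ‖r • (y : EuclideanSpace ℝ (Fin 3))‖ = r := by
    rw [norm_smul, Real.norm_of_nonneg hr.le, norm_eq_of_mem_sphere, mul_one]
  simp only [Set.mem_smul, Set.mem_image]
  constructor
  · rintro ⟨r, hr, _, ⟨y, hy, rfl⟩, rfl⟩
    exact ⟨(hnorm y hr.1).trans_lt hr.2, y, hy, r, hr.1, rfl⟩
  · rintro ⟨hx, y, hy, r, hr, rfl⟩
    exact ⟨r, ⟨hr, hnorm y hr ▸ hx⟩, y, ⟨y, hy, rfl⟩, rfl⟩

open scoped Pointwise in
theorem uniformSphere_apply {s : Set Sphere2} (hs : MeasurableSet s) :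
    uniformSphere s = (ENNReal.ofReal (4 * Real.pi / 3))⁻¹ *
      volume (Set.Ioo (0 : ℝ) 1 • (Subtype.val '' s)) := by
  have h : ENNReal.ofReal (4 * Real.pi) = 3 * ENNReal.ofReal (4 * Real.pi / 3) := by
    rw [← ENNReal.ofReal_ofNat, ← ENNReal.ofReal_mul (by norm_num)]
    congr 1
    ring
  rw [uniformSphere, sphereMeasure, Measure.smul_apply, smul_eq_mul, Measure.toSphere_apply' _ hs,
    h, ENNReal.mul_inv (by simp) (by simp)]
  simp only [finrank_euclideanSpace, Fintype.card_fin, Nat.cast_ofNat]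
  rw [mul_mul_mul_comm, ENNReal.inv_mul_cancel (by norm_num) (by norm_num), one_mul]

open scoped Pointwise in
theorem uniformSphere_abs_inner_le_of_pos {a : EuclideanSpace ℝ (Fin 3)} (ha : ‖a‖ = 1) {t : ℝ}
    (ht : 0 < t) (ht1 : t ≤ 1) :
    uniformSphere {y : Sphere2 | |⟪a, (y : EuclideanSpace ℝ (Fin 3))⟫| ≤ t} =
      ENNReal.ofReal t := by
  rw [uniformSphere_apply (measurableSet_le (by fun_prop) (by fun_prop)),
    ← ENNReal.ofReal_inv_of_pos (by positivity)]
  have hcone : Set.Ioo (0 : ℝ) 1 • (Subtype.val ''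
      {y : Sphere2 | |⟪a, (y : EuclideanSpace ℝ (Fin 3))⟫| ≤ t}) =
      {x : EuclideanSpace ℝ (Fin 3) | ‖x‖ < 1 ∧ |⟪a, x⟫| ≤ t * ‖x‖} \ {0} := by
    ext x
    rw [mem_Ioo_smul_image_sphere]
    simp only [Set.mem_ofPred_eq, Set.mem_sdiff, Set.mem_singleton_iff, and_assoc]
    refine and_congr_right fun _ => ⟨?_, fun ⟨h, hx⟩ => ?_⟩
    · rintro ⟨y, hy, r, hr, rfl⟩
      have hy1 : ‖(y : EuclideanSpace ℝ (Fin 3))‖ = 1 := norm_eq_of_mem_sphere y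
      refine ⟨?_, smul_ne_zero hr.ne' (ne_zero_of_mem_unit_sphere y)⟩
      rw [inner_smul_right, abs_mul, abs_of_pos hr, norm_smul, hy1, Real.norm_of_nonneg hr.le,
        mul_one, mul_comm t]
      exact mul_le_mul_of_nonneg_left hy hr.le
    · have hx0 : 0 < ‖x‖ := norm_pos_iff.2 hx
      refine ⟨⟨‖x‖⁻¹ • x, by simp [norm_smul, hx0.ne']⟩, ?_, ‖x‖, hx0, ?_⟩
      · rw [inner_smul_right, abs_mul, abs_of_pos (inv_pos.2 hx0), inv_mul_le_iff₀ hx0, mul_comm]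
        exact h
      · rw [smul_inv_smul₀ hx0.ne']
  rw [hcone, measure_sdiff_null (measure_singleton _), volume_ball_inter_cone ha ht ht1,
    ← ENNReal.ofReal_mul (by positivity), inv_mul_cancel_left₀ (by positivity)]

theorem uniformSphere_abs_inner_le {a : EuclideanSpace ℝ (Fin 3)} (ha : ‖a‖ = 1) {t : ℝ}
    (ht : 0 ≤ t) (ht1 : t ≤ 1) :
    uniformSphere {y : Sphere2 | |⟪a, (y : EuclideanSpace ℝ (Fin 3))⟫| ≤ t} =
      ENNReal.ofReal t := by
  rcases ht.eq_or_lt with rfl | ht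
  · rw [ENNReal.ofReal_zero, ← nonpos_iff_eq_zero]
    refine ENNReal.le_of_forall_pos_le_add fun ε hε _ => ?_
    rw [zero_add]
    refine (measure_mono fun y hy => ?_).trans
      ((uniformSphere_abs_inner_le_of_pos ha (t := min ε 1) (by positivity)
        (min_le_right _ _)).trans_le ?_)
    · exact (Set.mem_ofPred.1 hy).trans (by positivity)
    · rw [← ENNReal.ofReal_coe_nnreal]
      exact ENNReal.ofReal_le_ofReal (min_le_left _ _)
  · exact uniformSphere_abs_inner_le_of_pos ha ht ht1

theorem uniformSphere_abs_inner_lt {a : EuclideanSpace ℝ (Fin 3)} (ha : ‖a‖ = 1) {t : ℝ}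
    (ht : 0 ≤ t) (ht1 : t ≤ 1) :
    uniformSphere {y : Sphere2 | |⟪a, (y : EuclideanSpace ℝ (Fin 3))⟫| < t} =
      ENNReal.ofReal t := by
  refine le_antisymm ?_ (le_of_forall_lt fun c hc => ?_)
  · rw [← uniformSphere_abs_inner_le ha ht ht1]
    exact measure_mono fun y hy => (Set.mem_ofPred.1 hy).le
  · obtain ⟨d, hcd, hdt⟩ := exists_between hc
    have hd : d ≠ ∞ := (hdt.trans ENNReal.ofReal_lt_top).ne
    have hdt' : d.toReal < t := (ENNReal.lt_ofReal_iff_toReal_lt hd).1 hdt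
    refine hcd.trans_le ?_
    rw [← ENNReal.ofReal_toReal hd,
      ← uniformSphere_abs_inner_le ha ENNReal.toReal_nonneg (hdt'.le.trans ht1)]
    exact measure_mono fun y hy => (Set.mem_ofPred.1 hy).trans_lt hdt'

theorem abs_inner_sphere_le_one {a : EuclideanSpace ℝ (Fin 3)} (ha : ‖a‖ = 1) (y : Sphere2) :
    |⟪a, (y : EuclideanSpace ℝ (Fin 3))⟫| ≤ 1 := by
  simpa [ha, norm_eq_of_mem_sphere y] using abs_real_inner_le_norm a (y : EuclideanSpace ℝ (Fin 3))

instance : IsProbabilityMeasure uniformSphere where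
  measure_univ := by
    have ha : ‖(EuclideanSpace.single 0 1 : EuclideanSpace ℝ (Fin 3))‖ = 1 := by simp
    rw [← ENNReal.ofReal_one, ← uniformSphere_abs_inner_le ha zero_le_one le_rfl]
    congr 1
    exact (Set.eq_univ_of_forall fun y => abs_inner_sphere_le_one ha y).symm

instance : IsProbabilityMeasure pairMeasure :=
  inferInstanceAs (IsProbabilityMeasure (uniformSphere.prod uniformSphere))

/-- The restriction of a linear isometry of ℝ³ to the unit sphere. -/
noncomputable def sphereIsometry (g : EuclideanSpace ℝ (Fin 3) ≃ₗᵢ[ℝ] EuclideanSpace ℝ (Fin 3))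
    (y : Sphere2) : Sphere2 :=
  ⟨g y, by simp⟩

theorem measurable_sphereIsometry
    (g : EuclideanSpace ℝ (Fin 3) ≃ₗᵢ[ℝ] EuclideanSpace ℝ (Fin 3)) :
    Measurable (sphereIsometry g) :=
  (g.continuous.measurable.comp measurable_subtype_coe).subtype_mk

open scoped Pointwise in
theorem measurePreserving_sphereIsometry
    (g : EuclideanSpace ℝ (Fin 3) ≃ₗᵢ[ℝ] EuclideanSpace ℝ (Fin 3)) :
    MeasurePreserving (sphereIsometry g) uniformSphere uniformSphere := by
  have hg := measurable_sphereIsometry g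
  refine ⟨hg, Measure.ext fun s hs => ?_⟩
  rw [Measure.map_apply hg hs, uniformSphere_apply (hg hs), uniformSphere_apply hs,
    ← (g.measurePreserving.measure_preimage_equiv (f := g.toHomeomorph.toMeasurableEquiv)
      (Set.Ioo (0 : ℝ) 1 • (Subtype.val '' s)))]
  congr 2
  ext x
  simp only [mem_Ioo_smul_image_sphere, Set.mem_preimage]
  refine and_congr (by simp) ⟨?_, ?_⟩
  · rintro ⟨y, hy, r, hr, rfl⟩
    exact ⟨_, hy, r, hr, by simp [sphereIsometry]⟩
  · rintro ⟨y, hy, r, hr, h⟩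
    have hy' : sphereIsometry g (sphereIsometry g.symm y) = y := by ext1; simp [sphereIsometry]
    refine ⟨sphereIsometry g.symm y, by rwa [hy'], r, hr, g.injective ?_⟩
    simpa [sphereIsometry] using h

theorem pairMeasure_choice_mem {a : EuclideanSpace ℝ (Fin 3)} (ha : ‖a‖ = 1) {s : Set Sphere2}
    (hs : MeasurableSet s) :
    pairMeasure {p | choice a p ∈ s} =
      ∫⁻ x in s, ENNReal.ofReal (2 * |⟪a, (x : EuclideanSpace ℝ (Fin 3))⟫|) ∂uniformSphere := by
  let f : Sphere2 → ℝ := fun x => |⟪a, (x : EuclideanSpace ℝ (Fin 3))⟫|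
  have hf : Measurable f := by fun_prop
  have hf1 (x : Sphere2) : f x ≤ 1 := abs_inner_sphere_le_one ha x
  have hle : MeasurableSet {p : Sphere2 × Sphere2 | f p.2 ≤ f p.1} :=
    measurableSet_le (by fun_prop) (by fun_prop)
  have hlt : MeasurableSet {p : Sphere2 × Sphere2 | f p.1 < f p.2} :=
    measurableSet_lt (by fun_prop) (by fun_prop)
  have hsplit : {p | choice a p ∈ s} =
      (Prod.fst ⁻¹' s ∩ {p : Sphere2 × Sphere2 | f p.2 ≤ f p.1}) ∪
        (Prod.snd ⁻¹' s ∩ {p : Sphere2 × Sphere2 | f p.1 < f p.2}) := by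
    ext p
    by_cases h : f p.2 ≤ f p.1
    · have hc : choice a p = p.1 := if_pos h
      simp [hc, h]
    · have hc : choice a p = p.2 := if_neg h
      simp [hc, h, not_le.1 h]
  have hdisj : Disjoint (Prod.fst ⁻¹' s ∩ {p : Sphere2 × Sphere2 | f p.2 ≤ f p.1})
      (Prod.snd ⁻¹' s ∩ {p : Sphere2 × Sphere2 | f p.1 < f p.2}) :=
    Set.disjoint_left.2 fun p h h' => not_le.2 (Set.mem_ofPred.1 h'.2) (Set.mem_ofPred.1 h.2)
  have h₁ : pairMeasure (Prod.fst ⁻¹' s ∩ {p : Sphere2 × Sphere2 | f p.2 ≤ f p.1}) =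
      ∫⁻ x in s, ENNReal.ofReal (f x) ∂uniformSphere := by
    rw [pairMeasure, Measure.prod_apply ((measurable_fst hs).inter hle),
      ← lintegral_indicator hs]
    refine lintegral_congr fun x => ?_
    by_cases hx : x ∈ s
    · rw [Set.indicator_of_mem hx, ← uniformSphere_abs_inner_le ha (abs_nonneg _) (hf1 x)]
      congr 1
      ext y
      simp [hx, f]
    · rw [Set.indicator_of_notMem hx, ← measure_empty (μ := uniformSphere)]
      congr 1
      ext y
      simp [hx]
  have h₂ : pairMeasure (Prod.snd ⁻¹' s ∩ {p : Sphere2 × Sphere2 | f p.1 < f p.2}) =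
      ∫⁻ x in s, ENNReal.ofReal (f x) ∂uniformSphere := by
    rw [pairMeasure, Measure.prod_apply_symm ((measurable_snd hs).inter hlt),
      ← lintegral_indicator hs]
    refine lintegral_congr fun x => ?_
    by_cases hx : x ∈ s
    · rw [Set.indicator_of_mem hx, ← uniformSphere_abs_inner_lt ha (abs_nonneg _) (hf1 x)]
      congr 1
      ext y
      simp [hx, f]
    · rw [Set.indicator_of_notMem hx, ← measure_empty (μ := uniformSphere)]
      congr 1
      ext y
      simp [hx]
  rw [hsplit, measure_union hdisj ((measurable_snd hs).inter hlt), h₁, h₂,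
    ← lintegral_add_left (by fun_prop)]
  refine lintegral_congr fun x => ?_
  rw [← ENNReal.ofReal_add (abs_nonneg _) (abs_nonneg _), two_mul]

theorem sgn_mul_self (x : ℝ) : x * sgn x = |x| := by
  unfold sgn
  split_ifs with h
  · rw [abs_of_nonneg h, mul_one]
  · rw [abs_of_neg (not_le.1 h), mul_neg_one]

theorem abs_mul_sgn (x : ℝ) : |x| * sgn x = x := by
  unfold sgn
  split_ifs with h
  · rw [abs_of_nonneg h, mul_one]
  · rw [abs_of_neg (not_le.1 h), neg_mul_neg, mul_one]

theorem abs_sgn (x : ℝ) : |sgn x| = 1 := by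
  unfold sgn
  split_ifs <;> simp

theorem sgn_neg {x : ℝ} (hx : x ≠ 0) : sgn (-x) = -sgn x := by
  rcases hx.lt_or_gt with h | h
  · simp [sgn, h.le, not_le.2 h]
  · simp [sgn, h.le, not_le.2 h]

@[fun_prop]
theorem measurable_sgn : Measurable sgn :=
  Measurable.ite measurableSet_Ici measurable_const measurable_const

theorem ite_sgn_eq {x s : ℝ} (hs : s = 1 ∨ s = -1) :
    (if sgn x = s then (1 : ℝ) else 0) = (1 + s * sgn x) / 2 := by
  unfold sgn
  rcases hs with rfl | rfl <;> split_ifs <;> norm_num at *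

theorem integrable_sphere_of_bound {f : Sphere2 → ℝ} (hf : Measurable f) {C : ℝ}
    (hC : ∀ x, |f x| ≤ C) : Integrable f uniformSphere :=
  .of_bound hf.aestronglyMeasurable C (.of_forall hC)

theorem integral_comp_sphereIsometry
    (g : EuclideanSpace ℝ (Fin 3) ≃ₗᵢ[ℝ] EuclideanSpace ℝ (Fin 3)) {f : Sphere2 → ℝ}
    (hf : Measurable f) :
    ∫ x, f (sphereIsometry g x) ∂uniformSphere = ∫ x, f x ∂uniformSphere := by
  have h := measurePreserving_sphereIsometry g
  rw [← integral_map h.measurable.aemeasurable hf.aestronglyMeasurable, h.map_eq]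

theorem integral_eq_zero_of_comp_sphereIsometry
    (g : EuclideanSpace ℝ (Fin 3) ≃ₗᵢ[ℝ] EuclideanSpace ℝ (Fin 3)) {f : Sphere2 → ℝ}
    (hf : Measurable f) (hfg : ∀ᵐ x ∂uniformSphere, f (sphereIsometry g x) = -f x) :
    ∫ x, f x ∂uniformSphere = 0 := by
  have h := integral_comp_sphereIsometry g hf
  rw [integral_congr_ae hfg, integral_neg] at h
  linarith

theorem ae_inner_ne_zero {b : EuclideanSpace ℝ (Fin 3)} (hb : ‖b‖ = 1) :
    ∀ᵐ x : Sphere2 ∂uniformSphere, ⟪b, (x : EuclideanSpace ℝ (Fin 3))⟫ ≠ 0 := by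
  have h := uniformSphere_abs_inner_le hb le_rfl zero_le_one
  rw [ENNReal.ofReal_zero] at h
  filter_upwards [measure_eq_zero_iff_ae_notMem.1 h] with x hx h0
  exact hx (by simp [h0])

theorem integral_abs_inner {a : EuclideanSpace ℝ (Fin 3)} (ha : ‖a‖ = 1) :
    ∫ x : Sphere2, |⟪a, (x : EuclideanSpace ℝ (Fin 3))⟫| ∂uniformSphere = 1 / 2 := by
  have h := pairMeasure_choice_mem ha MeasurableSet.univ
  simp only [Set.mem_univ, Set.ofPred_true, measure_univ, Measure.restrict_univ] at h
  rw [← ofReal_integral_eq_lintegral_ofReal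
    (integrable_sphere_of_bound (by fun_prop) (C := 2) fun x => ?_)
    (.of_forall fun x => by positivity), integral_const_mul, eq_comm, ENNReal.ofReal_eq_one] at h
  · linarith
  · rw [abs_mul, abs_abs, abs_two]
    linarith [abs_inner_sphere_le_one ha x]

theorem integral_inner_sphere (a : EuclideanSpace ℝ (Fin 3)) :
    ∫ x : Sphere2, ⟪a, (x : EuclideanSpace ℝ (Fin 3))⟫ ∂uniformSphere = 0 :=
  integral_eq_zero_of_comp_sphereIsometry (LinearIsometryEquiv.neg ℝ) (by fun_prop)
    (.of_forall fun x => by simp [sphereIsometry])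

theorem integral_abs_inner_mul_sgn (a : EuclideanSpace ℝ (Fin 3)) {b : EuclideanSpace ℝ (Fin 3)}
    (hb : ‖b‖ = 1) :
    ∫ x : Sphere2, |⟪a, (x : EuclideanSpace ℝ (Fin 3))⟫| *
      sgn ⟪b, (x : EuclideanSpace ℝ (Fin 3))⟫ ∂uniformSphere = 0 := by
  refine integral_eq_zero_of_comp_sphereIsometry (LinearIsometryEquiv.neg ℝ) (by fun_prop) ?_
  filter_upwards [ae_inner_ne_zero hb] with x hx
  simp [sphereIsometry, sgn_neg hx]

theorem integrable_inner_mul_sgn (a b : EuclideanSpace ℝ (Fin 3)) :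
    Integrable (fun x : Sphere2 => ⟪a, (x : EuclideanSpace ℝ (Fin 3))⟫ *
      sgn ⟪b, (x : EuclideanSpace ℝ (Fin 3))⟫) uniformSphere :=
  integrable_sphere_of_bound (by fun_prop) (C := ‖a‖) fun x => by
    simpa [abs_mul, abs_sgn, norm_eq_of_mem_sphere x] using
      abs_real_inner_le_norm a (x : EuclideanSpace ℝ (Fin 3))

theorem integral_inner_mul_sgn_of_orthogonal {b c : EuclideanSpace ℝ (Fin 3)} (hc : ⟪b, c⟫ = 0) :
    ∫ x : Sphere2, ⟪c, (x : EuclideanSpace ℝ (Fin 3))⟫ *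
      sgn ⟪b, (x : EuclideanSpace ℝ (Fin 3))⟫ ∂uniformSphere = 0 := by
  let g := (Submodule.span ℝ {b}).reflection
  have hgb : g b = b :=
    Submodule.reflection_mem_subspace_eq_self (Submodule.mem_span_singleton_self b)
  have hgc : g c = -c := Submodule.reflection_mem_subspace_orthogonalComplement_eq_neg
    (Submodule.mem_orthogonal_singleton_iff_inner_right.2 hc)
  refine integral_eq_zero_of_comp_sphereIsometry g (by fun_prop) (.of_forall fun x => ?_)
  have h₁ : ⟪b, g x⟫ = ⟪b, (x : EuclideanSpace ℝ (Fin 3))⟫ := by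
    rw [← g.inner_map_map b x, hgb]
  have h₂ : ⟪c, g x⟫ = -⟪c, (x : EuclideanSpace ℝ (Fin 3))⟫ := by
    rw [← g.inner_map_map c x, hgc, inner_neg_left, neg_neg]
  simp only [sphereIsometry, h₁, h₂, neg_mul]

theorem integral_inner_mul_sgn (a : EuclideanSpace ℝ (Fin 3)) {b : EuclideanSpace ℝ (Fin 3)}
    (hb : ‖b‖ = 1) :
    ∫ x : Sphere2, ⟪a, (x : EuclideanSpace ℝ (Fin 3))⟫ *
      sgn ⟪b, (x : EuclideanSpace ℝ (Fin 3))⟫ ∂uniformSphere = ⟪a, b⟫ / 2 := by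
  have hc : ⟪b, a - ⟪a, b⟫ • b⟫ = 0 := by
    rw [inner_sub_right, inner_smul_right, real_inner_self_eq_norm_sq, hb, real_inner_comm]
    ring
  have hdecomp (x : Sphere2) : ⟪a, (x : EuclideanSpace ℝ (Fin 3))⟫ *
      sgn ⟪b, (x : EuclideanSpace ℝ (Fin 3))⟫ =
      ⟪a, b⟫ * |⟪b, (x : EuclideanSpace ℝ (Fin 3))⟫| +
        ⟪a - ⟪a, b⟫ • b, (x : EuclideanSpace ℝ (Fin 3))⟫ *
          sgn ⟪b, (x : EuclideanSpace ℝ (Fin 3))⟫ := by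
    rw [inner_sub_left, real_inner_smul_left, ← sgn_mul_self]
    ring
  simp_rw [hdecomp]
  rw [integral_add _ (integrable_inner_mul_sgn _ b), integral_const_mul, integral_abs_inner hb,
    integral_inner_mul_sgn_of_orthogonal hc]
  · ring
  · refine Integrable.const_mul (integrable_sphere_of_bound (by fun_prop) (C := 1) fun x => ?_) _
    rw [abs_abs]
    exact abs_inner_sphere_le_one hb x

theorem integral_abs_inner_sgn_eq {a b : EuclideanSpace ℝ (Fin 3)} (ha : ‖a‖ = 1) (hb : ‖b‖ = 1)
    (s t : ℝ) :
    ∫ x : Sphere2, 2 * |⟪a, (x : EuclideanSpace ℝ (Fin 3))⟫| *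
      ((1 + s * sgn ⟪a, (x : EuclideanSpace ℝ (Fin 3))⟫) / 2 *
        ((1 + t * sgn ⟪b, (x : EuclideanSpace ℝ (Fin 3))⟫) / 2)) ∂uniformSphere =
      (1 + s * t * ⟪a, b⟫) / 4 := by
  have hexpand (x : Sphere2) : 2 * |⟪a, (x : EuclideanSpace ℝ (Fin 3))⟫| *
      ((1 + s * sgn ⟪a, (x : EuclideanSpace ℝ (Fin 3))⟫) / 2 *
        ((1 + t * sgn ⟪b, (x : EuclideanSpace ℝ (Fin 3))⟫) / 2)) =
      1 / 2 * |⟪a, (x : EuclideanSpace ℝ (Fin 3))⟫| +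
      s / 2 * ⟪a, (x : EuclideanSpace ℝ (Fin 3))⟫ +
      t / 2 * (|⟪a, (x : EuclideanSpace ℝ (Fin 3))⟫| *
        sgn ⟪b, (x : EuclideanSpace ℝ (Fin 3))⟫) +
      s * t / 2 * (⟪a, (x : EuclideanSpace ℝ (Fin 3))⟫ *
        sgn ⟪b, (x : EuclideanSpace ℝ (Fin 3))⟫) := by
    linear_combination (s / 2 + s * t / 2 * sgn ⟪b, (x : EuclideanSpace ℝ (Fin 3))⟫) *
      abs_mul_sgn ⟪a, (x : EuclideanSpace ℝ (Fin 3))⟫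
  have h₁ : Integrable (fun x : Sphere2 => |⟪a, (x : EuclideanSpace ℝ (Fin 3))⟫|)
      uniformSphere :=
    integrable_sphere_of_bound (by fun_prop) (C := 1) fun x => by
      simpa using abs_inner_sphere_le_one ha x
  have h₂ : Integrable (fun x : Sphere2 => ⟪a, (x : EuclideanSpace ℝ (Fin 3))⟫) uniformSphere :=
    integrable_sphere_of_bound (by fun_prop) (abs_inner_sphere_le_one ha)
  have h₃ : Integrable (fun x : Sphere2 => |⟪a, (x : EuclideanSpace ℝ (Fin 3))⟫| *
      sgn ⟪b, (x : EuclideanSpace ℝ (Fin 3))⟫) uniformSphere :=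
    integrable_sphere_of_bound (by fun_prop) (C := 1) fun x => by
      simpa [abs_mul, abs_sgn] using abs_inner_sphere_le_one ha x
  simp_rw [hexpand]
  rw [integral_add (((h₁.const_mul _).fun_add (h₂.const_mul _)).fun_add (h₃.const_mul _))
      ((integrable_inner_mul_sgn a b).const_mul _),
    integral_add ((h₁.const_mul _).fun_add (h₂.const_mul _)) (h₃.const_mul _),
    integral_add (h₁.const_mul _) (h₂.const_mul _)]
  simp only [integral_const_mul]
  rw [integral_abs_inner ha, integral_inner_sphere, integral_abs_inner_mul_sgn a hb,
    integral_inner_mul_sgn a hb]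
  ring

/-- **Correctness of the one-bit communication protocol.** With `λ₀, λ₁` independent
uniform on `S²`, `λ_s` given by the choice method, and outputs `A = -sgn(a·λ_s)`,
`B = sgn(b·λ_s)`, one has `P(A = α, B = β) = (1 - αβ a·b)/4` for all
`α, β ∈ {-1, 1}`: the protocol reproduces the singlet joint distribution. -/
theorem communication_protocol_correct (a b : EuclideanSpace ℝ (Fin 3))
    (ha : ‖a‖ = 1) (hb : ‖b‖ = 1) (α β : ℝ)
    (hα : α = 1 ∨ α = -1) (hβ : β = 1 ∨ β = -1) :
    pairMeasure {p : Sphere2 × Sphere2 |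
        -sgn ⟪a, ((choice a p : Sphere2) : EuclideanSpace ℝ (Fin 3))⟫ = α ∧
        sgn ⟪b, ((choice a p : Sphere2) : EuclideanSpace ℝ (Fin 3))⟫ = β}
      = ENNReal.ofReal ((1 - α * β * ⟪a, b⟫) / 4) := by
  let s : Set Sphere2 := {x | sgn ⟪a, (x : EuclideanSpace ℝ (Fin 3))⟫ = -α} ∩
    {x | sgn ⟪b, (x : EuclideanSpace ℝ (Fin 3))⟫ = β}
  have hs : MeasurableSet s :=
    (measurableSet_eq_fun (by fun_prop) (by fun_prop)).inter
      (measurableSet_eq_fun (by fun_prop) (by fun_prop))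
  have hα' : -α = 1 ∨ -α = -1 := by rcases hα with rfl | rfl <;> simp
  have hset : {p : Sphere2 × Sphere2 |
        -sgn ⟪a, ((choice a p : Sphere2) : EuclideanSpace ℝ (Fin 3))⟫ = α ∧
        sgn ⟪b, ((choice a p : Sphere2) : EuclideanSpace ℝ (Fin 3))⟫ = β} =
      {p | choice a p ∈ s} := by
    ext p
    simp [s, neg_eq_iff_eq_neg]
  have hint : Integrable (fun x : Sphere2 => 2 * |⟪a, (x : EuclideanSpace ℝ (Fin 3))⟫|)
      uniformSphere :=
    (integrable_sphere_of_bound (by fun_prop) (C := 1) fun x => by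
      simpa using abs_inner_sphere_le_one ha x).const_mul 2
  rw [hset, pairMeasure_choice_mem ha hs, ← ofReal_integral_eq_lintegral_ofReal
    hint.integrableOn (.of_forall fun x => by positivity), ← integral_indicator hs]
  congr 1
  have hind (x : Sphere2) :
      s.indicator (fun x => 2 * |⟪a, (x : EuclideanSpace ℝ (Fin 3))⟫|) x =
      2 * |⟪a, (x : EuclideanSpace ℝ (Fin 3))⟫| *
        ((1 + -α * sgn ⟪a, (x : EuclideanSpace ℝ (Fin 3))⟫) / 2 *
          ((1 + β * sgn ⟪b, (x : EuclideanSpace ℝ (Fin 3))⟫) / 2)) := by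
    rw [← ite_sgn_eq hα', ← ite_sgn_eq hβ]
    simp only [Set.indicator, s, Set.mem_inter_iff, Set.mem_ofPred_eq]
    split_ifs <;> simp_all
  simp_rw [hind]
  rw [integral_abs_inner_sgn_eq ha hb]
  ring
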